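/- arXiv:2209.11733 — 2 statements merged into one kernel-verified Lean document; each statement's English description precedes it below -/
import Mathlib

section
/- Let λ > 0 and let (a_n) be a sequence of positive reals with a_n = λn + o(n). Let μ_{a_n} be the normalized Lebesgue measure on the simplex Δ_n(a_n) = {x ∈ ℝ^n : 0 ≤ x_0 ≤ x_1 ≤ … ≤ x_{n−1} ≤ a_n}. For every fixed positive integer k, the joint distribution of (x_0, x_1, …, x_{k−1}) under μ_{a_n} converges weakly, as n → ∞, to the distribution of the partial sums (Y_1, Y_1+Y_2, …, Y_1+…+Y_k) of k independent random variables each having the exponential distribution with mean λ; equivalently, the distribution of the increments (x_0, x_1−x_0, …, x_{k−1}−x_{k−2}) converges weakly to the k-fold product of the exponential distribution with mean λ. -/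
open MeasureTheory Filter Topology

/-- The exponential distribution with mean `lam`: density `lam⁻¹ * exp (-t/lam)` for `t ≥ 0`. -/
noncomputable def expMeasure (lam : ℝ) : Measure ℝ :=
  volume.withDensity fun t => ENNReal.ofReal (if 0 ≤ t then lam⁻¹ * Real.exp (-t / lam) else 0)

/-- The normalized Lebesgue measure on the simplex
`Δ_n(a) = {x ∈ ℝ^n : 0 ≤ x_0 ≤ x_1 ≤ … ≤ x_{n-1} ≤ a}`. -/
noncomputable def chainSimplexMeasure (n : ℕ) (a : ℝ) : Measure (Fin n → ℝ) :=
  (volume {x : Fin n → ℝ | (∀ i, 0 ≤ x i) ∧ Monotone x ∧ ∀ i, x i ≤ a})⁻¹ •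
    volume.restrict {x : Fin n → ℝ | (∀ i, 0 ≤ x i) ∧ Monotone x ∧ ∀ i, x i ≤ a}

/-!
Pass to the increments. The partial-sum map preserves volume and pulls the chain simplex back to the
corner simplex `{y | 0 ≤ y, ∑ i, y i ≤ a}`. Integrating out the last `n - k` increments, which range
over a corner simplex of size `a - s` with `s = y₀ + ⋯ + y_{k-1}`, gives the first `k` of them the
density `n (n - 1) ⋯ (n - k + 1) / a ^ k * (1 - s / a) ^ (n - k)`. When `a = a_n ∼ λ n` this tends
pointwise to `λ⁻¹ ^ k * exp (-s / λ)`, the density of `k` independent exponential variables. By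
Scheffé's lemma, pointwise convergence of probability densities implies weak convergence.
-/

section Scheffe

variable {α ι : Type*} {mα : MeasurableSpace α} {μ : Measure α} {l : Filter ι}
  [l.IsCountablyGenerated] {p : ι → α → ℝ} {q : α → ℝ}

theorem tendsto_integral_abs_sub_of_tendsto_integral (hp_nonneg : ∀ i, 0 ≤ᵐ[μ] p i)
    (hp : ∀ᶠ i in l, Integrable (p i) μ) (hq : Integrable q μ)
    (h_int : Tendsto (fun i ↦ ∫ x, p i x ∂μ) l (𝓝 (∫ x, q x ∂μ)))
    (h_lim : ∀ᵐ x ∂μ, Tendsto (fun i ↦ p i x) l (𝓝 (q x))) :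
    Tendsto (fun i ↦ ∫ x, |p i x - q x| ∂μ) l (𝓝 0) := by
  -- The deficit `(q - p i)⁺` is dominated by `|q|`, and `|p i - q| = p i - q + 2 (q - p i)⁺`.
  have h_deficit : Tendsto (fun i ↦ ∫ x, max (q x - p i x) 0 ∂μ) l (𝓝 0) := by
    suffices Tendsto (fun i ↦ ∫ x, max (q x - p i x) 0 ∂μ) l (𝓝 (∫ _, 0 ∂μ)) by
      simpa only [integral_zero] using this
    refine tendsto_integral_filter_of_dominated_convergence (fun x ↦ |q x|) ?_ ?_ hq.abs ?_
    · filter_upwards [hp] with i hi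
      exact (hq.sub hi).pos_part.aestronglyMeasurable
    · refine .of_forall fun i ↦ (hp_nonneg i).mono fun x hx ↦ ?_
      rw [Real.norm_of_nonneg (le_max_right _ _)]
      exact max_le ((sub_le_self _ hx).trans (le_abs_self _)) (abs_nonneg _)
    · filter_upwards [h_lim] with x hx
      simpa using (hx.const_sub (q x)).max (tendsto_const_nhds (x := (0 : ℝ)))
  have h_decomp : ∀ᶠ i in l, ∫ x, |p i x - q x| ∂μ =
      ∫ x, p i x ∂μ - ∫ x, q x ∂μ + 2 * ∫ x, max (q x - p i x) 0 ∂μ := by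
    filter_upwards [hp] with i hi
    have h_pos : Integrable (fun x ↦ max (q x - p i x) 0) μ := (hq.sub hi).pos_part
    have h_sub : Integrable (fun x ↦ p i x - q x) μ := hi.sub hq
    rw [← integral_sub hi hq, ← integral_const_mul, ← integral_add h_sub (h_pos.const_mul 2)]
    refine integral_congr_ae (.of_forall fun x ↦ ?_)
    rcases le_total (p i x) (q x) with h | h
    · simp only [abs_of_nonpos (sub_nonpos.2 h), max_eq_left (sub_nonneg.2 h)]
      ring
    · simp only [abs_of_nonneg (sub_nonneg.2 h), max_eq_right (sub_nonpos.2 h)]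
      ring
  refine Tendsto.congr' (h_decomp.mono fun _ h ↦ h.symm) ?_
  simpa using (h_int.sub_const (∫ x, q x ∂μ)).add (h_deficit.const_mul 2)

theorem integrable_and_integral_eq_one_of_isProbabilityMeasure_withDensity {g : α → ℝ}
    (hg : Measurable g) (hg_nonneg : ∀ x, 0 ≤ g x)
    (h : IsProbabilityMeasure (μ.withDensity fun x ↦ ENNReal.ofReal (g x))) :
    Integrable g μ ∧ ∫ x, g x ∂μ = 1 := by
  have h_mass : ∫⁻ x, ENNReal.ofReal (g x) ∂μ = 1 := by
    rw [← setLIntegral_univ, ← withDensity_apply _ .univ, h.measure_univ]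
  refine ⟨(lintegral_ofReal_ne_top_iff_integrable hg.aestronglyMeasurable
    (.of_forall hg_nonneg)).1 (by simp [h_mass]), ?_⟩
  rw [integral_eq_lintegral_of_nonneg_ae (.of_forall hg_nonneg) hg.aestronglyMeasurable, h_mass,
    ENNReal.toReal_one]

theorem integral_withDensity_ofReal_eq_integral_mul {g : α → ℝ} (hg : Measurable g)
    (hg_nonneg : ∀ x, 0 ≤ g x) (f : α → ℝ) :
    ∫ x, f x ∂μ.withDensity (fun x ↦ ENNReal.ofReal (g x)) = ∫ x, g x * f x ∂μ := by
  rw [integral_withDensity_eq_integral_toReal_smul hg.ennreal_ofReal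
    (.of_forall fun _ ↦ ENNReal.ofReal_lt_top)]
  simp only [ENNReal.toReal_ofReal (hg_nonneg _), smul_eq_mul]

theorem tendsto_integral_withDensity_of_tendsto [TopologicalSpace α] [OpensMeasurableSpace α]
    (hp_meas : ∀ i, Measurable (p i)) (hp_nonneg : ∀ i x, 0 ≤ p i x)
    (hp_prob : ∀ᶠ i in l,
      IsProbabilityMeasure (μ.withDensity fun x ↦ ENNReal.ofReal (p i x)))
    (hq_meas : Measurable q) (hq_nonneg : ∀ x, 0 ≤ q x)
    (hq_prob : IsProbabilityMeasure (μ.withDensity fun x ↦ ENNReal.ofReal (q x)))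
    (h_lim : ∀ x, Tendsto (fun i ↦ p i x) l (𝓝 (q x))) (f : BoundedContinuousFunction α ℝ) :
    Tendsto (fun i ↦ ∫ x, f x ∂μ.withDensity fun x ↦ ENNReal.ofReal (p i x)) l
      (𝓝 (∫ x, f x ∂μ.withDensity fun x ↦ ENNReal.ofReal (q x))) := by
  have hp : ∀ᶠ i in l, Integrable (p i) μ ∧ ∫ x, p i x ∂μ = 1 := hp_prob.mono fun i ↦
    integrable_and_integral_eq_one_of_isProbabilityMeasure_withDensity (hp_meas i) (hp_nonneg i)
  obtain ⟨hq_int, hq_one⟩ :=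
    integrable_and_integral_eq_one_of_isProbabilityMeasure_withDensity hq_meas hq_nonneg hq_prob
  have h_mass : Tendsto (fun i ↦ ∫ x, p i x ∂μ) l (𝓝 (∫ x, q x ∂μ)) := by
    rw [hq_one]
    exact tendsto_const_nhds.congr' (hp.mono fun i hi ↦ hi.2.symm)
  have h_L1 := tendsto_integral_abs_sub_of_tendsto_integral (fun i ↦ .of_forall (hp_nonneg i))
    (hp.mono fun _ ↦ And.left) hq_int h_mass (.of_forall h_lim)
  simp only [integral_withDensity_ofReal_eq_integral_mul (hp_meas _) (hp_nonneg _),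
    integral_withDensity_ofReal_eq_integral_mul hq_meas hq_nonneg]
  rw [tendsto_iff_norm_sub_tendsto_zero]
  refine squeeze_zero' (.of_forall fun _ ↦ norm_nonneg _) ?_ (by simpa using h_L1.mul_const ‖f‖)
  filter_upwards [hp] with i ⟨hi, _⟩
  have hf : AEStronglyMeasurable f μ := f.continuous.measurable.aestronglyMeasurable
  have hf_bdd : ∀ᵐ x ∂μ, ‖f x‖ ≤ ‖f‖ := .of_forall f.norm_coe_le_norm
  rw [← integral_sub (hi.mul_bdd hf hf_bdd) (hq_int.mul_bdd hf hf_bdd),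
    ← integral_mul_const]
  refine norm_integral_le_of_norm_le ((hi.sub hq_int).abs.mul_const _) (.of_forall fun x ↦ ?_)
  rw [← sub_mul, norm_mul, Real.norm_eq_abs]
  gcongr
  exact f.norm_coe_le_norm x

end Scheffe

theorem pi_withDensity_ofReal {ι : Type*} [Fintype ι] {E : ι → Type*}
    [∀ i, MeasurableSpace (E i)] {μ : ∀ i, Measure (E i)} [∀ i, SigmaFinite (μ i)]
    {g : ∀ i, E i → ℝ} (hg : ∀ i, Integrable (g i) (μ i)) (hg_nonneg : ∀ i x, 0 ≤ g i x) :
    Measure.pi (fun i ↦ (μ i).withDensity fun x ↦ ENNReal.ofReal (g i x)) =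
      (Measure.pi μ).withDensity fun x ↦ ENNReal.ofReal (∏ i, g i (x i)) := by
  refine Measure.pi_eq fun s hs ↦ ?_
  rw [withDensity_apply _ (.univ_pi hs),
    ← ofReal_integral_eq_lintegral_ofReal (Integrable.fintype_prod_dep hg).restrict
      (.of_forall fun x ↦ Finset.prod_nonneg fun i _ ↦ hg_nonneg i _),
    Measure.restrict_pi_pi, integral_fintype_prod_eq_prod g,
    ENNReal.ofReal_prod_of_nonneg fun i _ ↦ integral_nonneg (hg_nonneg i)]
  refine Finset.prod_congr rfl fun i _ ↦ ?_
  rw [withDensity_apply _ (hs i), ofReal_integral_eq_lintegral_ofReal (hg i).restrict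
    (.of_forall (hg_nonneg i))]

section PartialSum

theorem exists_eq_Iic_of_isLowerSet {ι : Type*} [LinearOrder ι] [LocallyFiniteOrderBot ι]
    {s : Finset ι} (hs : s.Nonempty) (hs_lower : IsLowerSet (s : Set ι)) :
    ∃ i, s = Finset.Iic i :=
  ⟨s.max' hs, Finset.ext fun _ ↦
    ⟨fun h ↦ Finset.mem_Iic.2 (s.le_max' _ h),
      fun h ↦ hs_lower (Finset.mem_Iic.1 h) (s.max'_mem hs)⟩⟩

variable {ι : Type*} [LinearOrder ι] [LocallyFiniteOrderBot ι]

/-- The partial sums `(y₀, y₀ + y₁, …)` of a family `y`, which recover a point of the chain simplex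
from its increments. Unlike `Fin.partialSum`, they are indexed as `y` is, with no initial zero. -/
def inclusivePartialSum (y : ι → ℝ) (i : ι) : ℝ := ∑ j ∈ Finset.Iic i, y j

theorem continuous_inclusivePartialSum : Continuous (inclusivePartialSum (ι := ι)) := by
  unfold inclusivePartialSum
  fun_prop

theorem forall_nonneg_iff_monotone_inclusivePartialSum {y : ι → ℝ} :
    (∀ i, 0 ≤ y i) ↔ (∀ i, 0 ≤ inclusivePartialSum y i) ∧ Monotone (inclusivePartialSum y) := by
  refine ⟨fun h ↦ ⟨fun i ↦ Finset.sum_nonneg fun j _ ↦ h j, fun i i' hi ↦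
    Finset.sum_le_sum_of_subset_of_nonneg (Finset.Iic_subset_Iic.2 hi) fun j _ _ ↦ h j⟩, ?_⟩
  rintro ⟨h_nonneg, h_mono⟩ i
  have h_split : inclusivePartialSum y i = y i + ∑ j ∈ Finset.Iio i, y j := by
    rw [inclusivePartialSum, ← Finset.Iio_insert, Finset.sum_insert (by simp)]
  rcases (Finset.Iio i).eq_empty_or_nonempty with h_empty | h_nonempty
  · simpa [h_split, h_empty] using h_nonneg i
  · obtain ⟨j, hj⟩ := exists_eq_Iic_of_isLowerSet h_nonempty (by simpa using isLowerSet_Iio i)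
    have h_lt : j < i := Finset.mem_Iio.1 (hj ▸ Finset.mem_Iic.2 le_rfl)
    have h_le : inclusivePartialSum y j ≤ inclusivePartialSum y i := h_mono h_lt.le
    rw [h_split, hj, inclusivePartialSum] at h_le
    linarith

theorem measurePreserving_inclusivePartialSum [Fintype ι] :
    MeasurePreserving (inclusivePartialSum (ι := ι)) := by
  let M : Matrix ι ι ℝ := Matrix.of fun i j ↦ if j ≤ i then 1 else 0
  have h_det : M.det = 1 := by
    have h_lower : M.BlockTriangular OrderDual.toDual := fun i j hij ↦
      if_neg (not_le.2 (OrderDual.toDual_lt_toDual.1 hij))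
    simp [Matrix.det_of_isLowerTriangular M h_lower, M]
  have h_eq : ⇑(Matrix.toLin' M) = inclusivePartialSum (ι := ι) := by
    ext y i
    simp only [Matrix.toLin'_apply, Matrix.mulVec, dotProduct, M, Matrix.of_apply, ite_mul,
      one_mul, zero_mul, inclusivePartialSum, ← Finset.sum_filter]
    congr 1
    ext j
    simp
  refine ⟨continuous_inclusivePartialSum.measurable, ?_⟩
  simpa [h_det, h_eq] using
    Real.map_matrix_volume_pi_eq_smul_volume_pi (M := M) (by simp [h_det])

theorem inclusivePartialSum_comp_castLE {k n : ℕ} (h : k ≤ n) (y : Fin n → ℝ) (i : Fin k) :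
    inclusivePartialSum y (Fin.castLE h i) =
      inclusivePartialSum (fun j ↦ y (Fin.castLE h j)) i := by
  rw [inclusivePartialSum, ← Fin.map_castLEEmb_Iic, Finset.sum_map]
  rfl

end PartialSum

section Simplex

variable {ι : Type*}

/-- The simplex `Δ_n(a)` of the theorem, with the coordinates indexed by any preorder. -/
def chainSimplex (ι : Type*) [Preorder ι] (a : ℝ) : Set (ι → ℝ) :=
  {x | (∀ i, 0 ≤ x i) ∧ Monotone x ∧ ∀ i, x i ≤ a}

/-- The corner simplex `{y | 0 ≤ y, ∑ i, y i ≤ a}`: the increments of the points of the chain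
simplex. -/
def cornerSimplex (ι : Type*) [Fintype ι] (a : ℝ) : Set (ι → ℝ) :=
  {y | (∀ i, 0 ≤ y i) ∧ ∑ i, y i ≤ a}

theorem measurableSet_chainSimplex [Preorder ι] [Countable ι] (a : ℝ) :
    MeasurableSet (chainSimplex ι a) := by
  refine IsClosed.measurableSet ?_
  simp only [chainSimplex, Set.ofPred_and, Set.ofPred_forall]
  exact (isClosed_iInter fun i ↦ isClosed_le continuous_const (continuous_apply i)).inter
    (isClosed_monotone.inter
      (isClosed_iInter fun i ↦ isClosed_le (continuous_apply i) continuous_const))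

theorem measurableSet_cornerSimplex [Fintype ι] (a : ℝ) :
    MeasurableSet (cornerSimplex ι a) := by
  refine IsClosed.measurableSet ?_
  simp only [cornerSimplex, Set.ofPred_and, Set.ofPred_forall]
  exact (isClosed_iInter fun i ↦ isClosed_le continuous_const (continuous_apply i)).inter
    (isClosed_le (by fun_prop) continuous_const)

theorem cornerSimplex_eq_empty [Fintype ι] {a : ℝ} (ha : a < 0) : cornerSimplex ι a = ∅ :=
  Set.eq_empty_of_forall_notMem fun _ hy ↦
    ((Finset.sum_nonneg fun i _ ↦ hy.1 i).trans hy.2).not_gt ha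

theorem inclusivePartialSum_preimage_chainSimplex [LinearOrder ι] [LocallyFiniteOrderBot ι]
    [Fintype ι] {a : ℝ} (ha : 0 ≤ a) :
    inclusivePartialSum ⁻¹' chainSimplex ι a = cornerSimplex ι a := by
  ext y
  simp only [chainSimplex, cornerSimplex, Set.mem_preimage, Set.mem_ofPred_eq, ← and_assoc,
    ← forall_nonneg_iff_monotone_inclusivePartialSum]
  refine and_congr_right fun hy ↦ ⟨fun h ↦ ?_, fun h i ↦ ?_⟩
  · rcases (Finset.univ : Finset ι).eq_empty_or_nonempty with h_empty | h_nonempty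
    · simpa [h_empty] using ha
    · obtain ⟨i, hi⟩ := exists_eq_Iic_of_isLowerSet h_nonempty (by simpa using isLowerSet_univ)
      rw [hi]
      exact h i
  · exact (Finset.sum_le_univ_sum_of_nonneg hy).trans h

theorem cons_mem_cornerSimplex {n : ℕ} {a t : ℝ} {y : Fin n → ℝ} :
    (Fin.cons t y : Fin (n + 1) → ℝ) ∈ cornerSimplex (Fin (n + 1)) a ↔
      0 ≤ t ∧ y ∈ cornerSimplex (Fin n) (a - t) := by
  simp only [cornerSimplex, Set.mem_ofPred_eq, Fin.forall_fin_succ, Fin.cons_zero, Fin.cons_succ,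
    Fin.sum_univ_succ, le_sub_iff_add_le', and_assoc]

theorem append_mem_cornerSimplex {k m : ℕ} {a : ℝ} {u : Fin k → ℝ} {v : Fin m → ℝ} :
    Fin.append u v ∈ cornerSimplex (Fin (k + m)) a ↔
      (∀ i, 0 ≤ u i) ∧ v ∈ cornerSimplex (Fin m) (a - ∑ i, u i) := by
  simp only [cornerSimplex, Set.mem_ofPred_eq, Fin.forall_fin_add, Fin.append_left,
    Fin.append_right, Fin.sum_univ_add, le_sub_iff_add_le', and_assoc]

theorem measurePreserving_finCons (n : ℕ) : MeasurePreserving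
    (fun p : ℝ × (Fin n → ℝ) ↦ (Fin.cons p.1 p.2 : Fin (n + 1) → ℝ)) := by
  convert (volume_preserving_piFinSuccAbove (fun _ : Fin (n + 1) ↦ ℝ) 0).symm using 1
  ext p i
  simp [MeasurableEquiv.piFinSuccAbove]

theorem measurePreserving_finAppend (k m : ℕ) : MeasurePreserving
    (fun p : (Fin k → ℝ) × (Fin m → ℝ) ↦ Fin.append p.1 p.2) := by
  have h_comp :=
    (volume_measurePreserving_piCongrLeft (fun _ : Fin (k + m) ↦ ℝ) finSumFinEquiv).comp
      (volume_measurePreserving_sumPiEquivProdPi_symm fun _ : Fin k ⊕ Fin m ↦ ℝ)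
  convert! h_comp with p
  ext i
  refine Fin.addCases (fun i ↦ ?_) (fun i ↦ ?_) i <;>
    simp [MeasurableEquiv.coe_piCongrLeft, MeasurableEquiv.coe_sumPiEquivProdPi_symm,
      Equiv.piCongrLeft_apply]

theorem integral_Icc_sub_pow_div_factorial (n : ℕ) {a : ℝ} (ha : 0 ≤ a) :
    ∫ t in Set.Icc 0 a, (a - t) ^ n / n.factorial = a ^ (n + 1) / (n + 1).factorial := by
  rw [integral_Icc_eq_integral_Ioc, ← intervalIntegral.integral_of_le ha,
    intervalIntegral.integral_div, intervalIntegral.integral_comp_sub_left (· ^ n),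
    integral_pow, Nat.factorial_succ]
  push_cast
  field_simp
  simp

theorem volume_cornerSimplex (n : ℕ) {a : ℝ} (ha : 0 ≤ a) :
    volume (cornerSimplex (Fin n) a) = ENNReal.ofReal (a ^ n / n.factorial) := by
  induction n generalizing a with
  | zero =>
    have h_univ : cornerSimplex (Fin 0) a = Set.univ.pi fun _ ↦ Set.univ := by
      ext y
      simpa [cornerSimplex] using ha
    rw [h_univ, volume_pi_pi]
    simp
  | succ n ih =>
    have h_fiber : ∀ t, volume {y | (Fin.cons t y : Fin (n + 1) → ℝ) ∈ cornerSimplex _ a} =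
        (Set.Icc 0 a).indicator (fun t ↦ ENNReal.ofReal ((a - t) ^ n / n.factorial)) t := by
      intro t
      simp only [cons_mem_cornerSimplex]
      by_cases ht : t ∈ Set.Icc 0 a
      · simp [ht, ht.1, ← ih (sub_nonneg.2 ht.2)]
      · rw [Set.indicator_of_notMem ht]
        rcases not_and_or.1 ht with h | h
        · simp [h]
        · simp [cornerSimplex_eq_empty (sub_neg.2 (not_le.1 h))]
    calc volume (cornerSimplex (Fin (n + 1)) a)
        = ∫⁻ t, volume {y | (Fin.cons t y : Fin (n + 1) → ℝ) ∈ cornerSimplex _ a} := by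
          rw [← (measurePreserving_finCons n).measure_preimage
              (measurableSet_cornerSimplex a).nullMeasurableSet, Measure.volume_eq_prod,
            Measure.prod_apply
              ((measurePreserving_finCons n).measurable (measurableSet_cornerSimplex a))]
          rfl
      _ = ∫⁻ t in Set.Icc 0 a, ENNReal.ofReal ((a - t) ^ n / n.factorial) := by
          simp only [h_fiber, lintegral_indicator measurableSet_Icc]
      _ = ENNReal.ofReal (a ^ (n + 1) / (n + 1).factorial) := by
          rw [← integral_Icc_sub_pow_div_factorial n ha, ofReal_integral_eq_lintegral_ofReal]
          · exact (Continuous.continuousOn (by fun_prop)).integrableOn_Icc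
          · filter_upwards [ae_restrict_mem measurableSet_Icc] with t ht
            have := sub_nonneg.2 ht.2
            positivity

theorem map_castAdd_restrict_cornerSimplex (k m : ℕ) (a : ℝ) :
    (volume.restrict (cornerSimplex (Fin (k + m)) a)).map (fun x i ↦ x (Fin.castAdd m i)) =
      volume.withDensity ((cornerSimplex (Fin k) a).indicator fun u ↦
        ENNReal.ofReal ((a - ∑ i, u i) ^ m / m.factorial)) := by
  have h_proj : Measurable fun (x : Fin (k + m) → ℝ) (i : Fin k) ↦ x (Fin.castAdd m i) := by
    fun_prop
  have h_fiber : ∀ u, volume {v | Fin.append u v ∈ cornerSimplex (Fin (k + m)) a} =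
      (cornerSimplex (Fin k) a).indicator
        (fun u ↦ ENNReal.ofReal ((a - ∑ i, u i) ^ m / m.factorial)) u := by
    intro u
    simp only [append_mem_cornerSimplex]
    by_cases hu : u ∈ cornerSimplex (Fin k) a
    · simp [hu, hu.1, ← volume_cornerSimplex m (sub_nonneg.2 hu.2)]
    · rw [Set.indicator_of_notMem hu]
      rcases not_and_or.1 hu with h | h
      · simp [h]
      · simp [cornerSimplex_eq_empty (sub_neg.2 (not_le.1 h))]
  ext B hB
  have h_meas : MeasurableSet
      ((fun (x : Fin (k + m) → ℝ) i ↦ x (Fin.castAdd m i)) ⁻¹' B ∩ cornerSimplex _ a) :=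
    (h_proj hB).inter (measurableSet_cornerSimplex a)
  rw [Measure.map_apply h_proj hB, Measure.restrict_apply (h_proj hB), withDensity_apply _ hB,
    ← (measurePreserving_finAppend k m).measure_preimage h_meas.nullMeasurableSet,
    Measure.volume_eq_prod,
    Measure.prod_apply ((measurePreserving_finAppend k m).measurable h_meas),
    ← lintegral_indicator hB]
  refine lintegral_congr fun u ↦ ?_
  by_cases hu : u ∈ B
  · rw [Set.indicator_of_mem hu, ← h_fiber]
    congr 1 with v
    simp [hu]
  · simp [hu, ← Set.preimage_comp, Function.comp_def]

end Simplex

section Increments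

/-- The joint density of the first `k` increments `x₀, x₁ - x₀, …` of a uniformly distributed point
of the chain simplex in dimension `n`. It is meant for `k ≤ n`, so that `n - k` is not truncated. -/
noncomputable def incrementDensity (k n : ℕ) (a : ℝ) : (Fin k → ℝ) → ℝ :=
  (cornerSimplex (Fin k) a).indicator fun y ↦
    n.descFactorial k / a ^ k * (1 - (∑ i, y i) / a) ^ (n - k)

theorem incrementDensity_nonneg (k n : ℕ) {a : ℝ} (ha : 0 < a) (y : Fin k → ℝ) :
    0 ≤ incrementDensity k n a y := by
  refine Set.indicator_nonneg (fun y hy ↦ ?_) y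
  have := sub_nonneg.2 ((div_le_one ha).2 hy.2)
  positivity

theorem measurable_incrementDensity (k n : ℕ) (a : ℝ) : Measurable (incrementDensity k n a) :=
  .indicator (by fun_prop) (measurableSet_cornerSimplex a)

theorem map_castLE_cond_cornerSimplex {k n : ℕ} (h : k ≤ n) {a : ℝ} (ha : 0 < a) :
    (ProbabilityTheory.cond volume (cornerSimplex (Fin n) a)).map
        (fun x i ↦ x (Fin.castLE h i)) =
      volume.withDensity fun y ↦ ENNReal.ofReal (incrementDensity k n a y) := by
  obtain ⟨m, rfl⟩ := Nat.exists_eq_add_of_le h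
  have h_vol : 0 < a ^ (k + m) / (k + m).factorial := by positivity
  have h_normalize (s : ℝ) : (a ^ (k + m) / (k + m).factorial)⁻¹ * ((a - s) ^ m / m.factorial) =
      (k + m).descFactorial k / a ^ k * (1 - s / a) ^ m := by
    have h_fact := Nat.factorial_mul_descFactorial h
    rw [Nat.add_sub_cancel_left] at h_fact
    rw [one_sub_div ha.ne', div_pow, pow_add, ← h_fact]
    push_cast
    field_simp
  rw [ProbabilityTheory.cond, Measure.map_smul, volume_cornerSimplex _ ha.le]
  change _ • (volume.restrict _).map
    (fun (x : Fin (k + m) → ℝ) (i : Fin k) ↦ x (Fin.castAdd m i)) = _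
  rw [map_castAdd_restrict_cornerSimplex, ← withDensity_smul' _ _ (by simpa using h_vol)]
  congr 1 with y
  by_cases hy : y ∈ cornerSimplex (Fin k) a
  · simp only [incrementDensity, Pi.smul_apply, smul_eq_mul, Set.indicator_of_mem hy]
    rw [← ENNReal.ofReal_inv_of_pos h_vol, ← ENNReal.ofReal_mul (inv_nonneg.2 h_vol.le),
      h_normalize, Nat.add_sub_cancel_left]
  · simp [incrementDensity, hy]

theorem chainSimplexMeasure_eq_map_inclusivePartialSum (n : ℕ) {a : ℝ} (ha : 0 ≤ a) :
    chainSimplexMeasure n a =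
      (ProbabilityTheory.cond volume (cornerSimplex (Fin n) a)).map inclusivePartialSum := by
  have h_mp := measurePreserving_inclusivePartialSum (ι := Fin n)
  have h_meas := measurableSet_chainSimplex (ι := Fin n) a
  rw [← inclusivePartialSum_preimage_chainSimplex ha, ProbabilityTheory.cond, Measure.map_smul,
    (h_mp.restrict_preimage h_meas).map_eq, h_mp.measure_preimage h_meas.nullMeasurableSet]
  rfl

theorem map_castLE_chainSimplexMeasure {k n : ℕ} (h : k ≤ n) {a : ℝ} (ha : 0 < a) :
    (chainSimplexMeasure n a).map (fun x i ↦ x (Fin.castLE h i)) =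
      (volume.withDensity fun y ↦ ENNReal.ofReal (incrementDensity k n a y)).map
        inclusivePartialSum := by
  have h_sum {m : ℕ} : Measurable (inclusivePartialSum (ι := Fin m)) :=
    continuous_inclusivePartialSum.measurable
  rw [chainSimplexMeasure_eq_map_inclusivePartialSum n ha.le, ← map_castLE_cond_cornerSimplex h ha,
    Measure.map_map (by fun_prop) h_sum, Measure.map_map h_sum (by fun_prop)]
  congr 1 with x i
  exact inclusivePartialSum_comp_castLE h x i

theorem isProbabilityMeasure_withDensity_incrementDensity {k n : ℕ} (h : k ≤ n) {a : ℝ}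
    (ha : 0 < a) :
    IsProbabilityMeasure
      (volume.withDensity fun y ↦ ENNReal.ofReal (incrementDensity k n a y)) := by
  have h_cond : IsProbabilityMeasure
      (ProbabilityTheory.cond volume (cornerSimplex (Fin n) a)) := by
    apply ProbabilityTheory.cond_isProbabilityMeasure_of_finite <;>
      rw [volume_cornerSimplex n ha.le]
    · exact (ENNReal.ofReal_pos.2 (by positivity)).ne'
    · exact ENNReal.ofReal_ne_top
  rw [← map_castLE_cond_cornerSimplex h ha]
  exact Measure.isProbabilityMeasure_map (Measurable.aemeasurable (by fun_prop))

theorem integral_chainSimplexMeasure {k n : ℕ} (h : k ≤ n) {a : ℝ} (ha : 0 < a)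
    (f : BoundedContinuousFunction (Fin k → ℝ) ℝ) :
    ∫ x, f (fun i ↦ x (Fin.castLE h i)) ∂chainSimplexMeasure n a =
      ∫ y, f (inclusivePartialSum y)
        ∂volume.withDensity fun y ↦ ENNReal.ofReal (incrementDensity k n a y) := by
  rw [← integral_map (φ := fun (x : Fin n → ℝ) (i : Fin k) ↦ x (Fin.castLE h i))
      (Measurable.aemeasurable (by fun_prop)) f.continuous.aestronglyMeasurable,
    map_castLE_chainSimplexMeasure h ha,
    integral_map continuous_inclusivePartialSum.aemeasurable f.continuous.aestronglyMeasurable]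

end Increments

section Exponential

open ProbabilityTheory (exponentialPDFReal exponentialPDFReal_nonneg
  measurable_exponentialPDFReal)

theorem exponentialPDFReal_eq_ite (r t : ℝ) :
    exponentialPDFReal r t = if 0 ≤ t then r * Real.exp (-(r * t)) else 0 := by
  simp [exponentialPDFReal, ProbabilityTheory.gammaPDFReal]

theorem prod_exponentialPDFReal {ι : Type*} [Fintype ι] (r : ℝ) (y : ι → ℝ) :
    ∏ i, exponentialPDFReal r (y i) =
      if ∀ i, 0 ≤ y i then r ^ Fintype.card ι * Real.exp (-(r * ∑ i, y i)) else 0 := by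
  simp only [exponentialPDFReal_eq_ite]
  by_cases hy : ∀ i, 0 ≤ y i
  · simp [hy, Finset.prod_mul_distrib, ← Real.exp_sum, Finset.mul_sum]
  · rw [if_neg hy]
    obtain ⟨i, hi⟩ := not_forall.1 hy
    exact Finset.prod_eq_zero (Finset.mem_univ i) (if_neg hi)

theorem expMeasure_eq_withDensity_exponentialPDFReal (lam : ℝ) :
    expMeasure lam = volume.withDensity fun t ↦ ENNReal.ofReal (exponentialPDFReal lam⁻¹ t) := by
  simp only [expMeasure, exponentialPDFReal_eq_ite, div_eq_inv_mul, mul_neg]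

theorem isProbabilityMeasure_expMeasure {lam : ℝ} (hlam : 0 < lam) :
    IsProbabilityMeasure (expMeasure lam) := by
  rw [expMeasure_eq_withDensity_exponentialPDFReal]
  exact ProbabilityTheory.isProbabilityMeasure_expMeasure (inv_pos.2 hlam)

theorem pi_expMeasure_eq_withDensity {ι : Type*} [Fintype ι] {lam : ℝ} (hlam : 0 < lam) :
    Measure.pi (fun _ : ι ↦ expMeasure lam) =
      volume.withDensity fun y ↦ ENNReal.ofReal (∏ i, exponentialPDFReal lam⁻¹ (y i)) := by
  have h_prob := isProbabilityMeasure_expMeasure hlam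
  have h_nonneg := exponentialPDFReal_nonneg (inv_pos.2 hlam)
  rw [expMeasure_eq_withDensity_exponentialPDFReal] at h_prob ⊢
  have h_int := (integrable_and_integral_eq_one_of_isProbabilityMeasure_withDensity
    (measurable_exponentialPDFReal _) h_nonneg h_prob).1
  exact pi_withDensity_ofReal (fun _ ↦ h_int) fun _ ↦ h_nonneg

end Exponential

section Asymptotics

variable {a : ℕ → ℝ} {r : ℝ}

theorem tendsto_natCast_div_of_sub_isLittleO {lam : ℝ} (hlam : lam ≠ 0)
    (hlim : (fun n ↦ a n - lam * n) =o[atTop] (fun n ↦ (n : ℝ))) :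
    Tendsto (fun n : ℕ ↦ n / a n) atTop (𝓝 lam⁻¹) := by
  have h_ratio : Tendsto (fun n : ℕ ↦ a n / n) atTop (𝓝 lam) := by
    have h_add := hlim.tendsto_div_nhds_zero.add_const lam
    rw [zero_add] at h_add
    refine h_add.congr' ?_
    filter_upwards [eventually_ne_atTop 0] with n hn
    field_simp
    ring
  simpa only [inv_div] using h_ratio.inv₀ hlam

theorem tendsto_inv_nhds_zero (h : Tendsto (fun n : ℕ ↦ n / a n) atTop (𝓝 r)) :
    Tendsto (fun n ↦ (a n)⁻¹) atTop (𝓝 0) := by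
  have h_mul := h.mul tendsto_inv_atTop_nhds_zero_nat
  rw [mul_zero] at h_mul
  refine h_mul.congr' ?_
  filter_upwards [eventually_ne_atTop 0] with n hn
  field_simp

theorem tendsto_descFactorial_div_pow (k : ℕ)
    (h : Tendsto (fun n : ℕ ↦ n / a n) atTop (𝓝 r)) :
    Tendsto (fun n : ℕ ↦ (n.descFactorial k : ℝ) / a n ^ k) atTop (𝓝 (r ^ k)) := by
  have h_equiv := (isEquivalent_descFactorial k).mul
    (Asymptotics.IsEquivalent.refl (u := fun n ↦ (a n ^ k)⁻¹))
  refine (h_equiv.symm.tendsto_nhds ((h.pow k).congr fun n ↦ ?_)).congr fun n ↦ ?_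
  · simp only [Pi.mul_apply]
    rw [div_pow, div_eq_mul_inv]
  · rfl

theorem tendsto_one_sub_div_pow_sub (k : ℕ) (s : ℝ)
    (h : Tendsto (fun n : ℕ ↦ n / a n) atTop (𝓝 r)) :
    Tendsto (fun n ↦ (1 - s / a n) ^ (n - k)) atTop (𝓝 (Real.exp (-(r * s)))) := by
  have h_base : Tendsto (fun n ↦ 1 - s / a n) atTop (𝓝 1) := by
    simpa [div_eq_mul_inv] using ((tendsto_inv_nhds_zero h).const_mul s).const_sub 1
  have h_pow : Tendsto (fun n ↦ (1 - s / a n) ^ n) atTop (𝓝 (Real.exp (-(r * s)))) := by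
    simp only [sub_eq_add_neg]
    refine Real.tendsto_one_add_pow_exp_of_tendsto ((h.mul_const s).neg.congr fun n ↦ ?_)
    ring
  have h_div := h_pow.div (h_base.pow k) (by simp)
  rw [one_pow, div_one] at h_div
  refine h_div.congr' ?_
  filter_upwards [h_base.eventually_ne one_ne_zero, eventually_ge_atTop k] with n hn hkn
  rw [Pi.div_apply, pow_sub₀ _ hn hkn, div_eq_mul_inv]

theorem tendsto_incrementDensity (ha : ∀ᶠ n in atTop, 0 < a n)
    (h : Tendsto (fun n : ℕ ↦ n / a n) atTop (𝓝 r)) {k : ℕ} (y : Fin k → ℝ) :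
    Tendsto (fun n ↦ incrementDensity k n (a n) y) atTop
      (𝓝 (∏ i, ProbabilityTheory.exponentialPDFReal r (y i))) := by
  rw [prod_exponentialPDFReal]
  by_cases hy : ∀ i, 0 ≤ y i
  · have h_mem : ∀ᶠ n in atTop, y ∈ cornerSimplex (Fin k) (a n) := by
      have h_lt : ∀ᶠ n in atTop, (∑ i, y i) * (a n)⁻¹ < 1 :=
        ((tendsto_inv_nhds_zero h).const_mul _).eventually_lt_const (by simp)
      filter_upwards [ha, h_lt] with n h_pos hn
      exact ⟨hy, ((mul_inv_lt_iff₀ h_pos).1 hn).le.trans_eq (one_mul _)⟩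
    rw [if_pos hy, Fintype.card_fin]
    refine ((tendsto_descFactorial_div_pow k h).mul
      (tendsto_one_sub_div_pow_sub k (∑ i, y i) h)).congr' ?_
    filter_upwards [h_mem] with n hn
    rw [incrementDensity, Set.indicator_of_mem hn]
  · have h_zero : ∀ n, incrementDensity k n (a n) y = 0 := fun n ↦
      Set.indicator_of_notMem (fun hn ↦ hy hn.1) _
    rw [if_neg hy]
    simp only [h_zero, tendsto_const_nhds]

end Asymptotics

/-- With `a_n = λ n + o(n)`, the joint distribution of the first `k` coordinates under the
normalized Lebesgue measure on `Δ_n(a_n)` converges weakly to the distribution of the partial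
sums `(Y_1, Y_1 + Y_2, …, Y_1 + ⋯ + Y_k)` of `k` i.i.d. exponential variables with mean `λ`. -/
theorem stmt1 (lam : ℝ) (hlam : 0 < lam) (a : ℕ → ℝ) (ha : ∀ n, 0 < a n)
    (hlim : (fun n => a n - lam * n) =o[atTop] (fun n => (n : ℝ))) (k : ℕ) (hk : 0 < k) :
    ∀ f : BoundedContinuousFunction (Fin k → ℝ) ℝ,
      Tendsto
        (fun n => ∫ x, f (fun i : Fin k => if h : (i : ℕ) < n then x ⟨i, h⟩ else 0)
          ∂ chainSimplexMeasure n (a n))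
        atTop
        (𝓝 (∫ y, f (fun i : Fin k => ∑ j ∈ Finset.Iic i, y j)
          ∂ Measure.pi fun _ : Fin k => expMeasure lam)) := by
  intro f
  have h_prob := isProbabilityMeasure_expMeasure hlam
  have h_density := tendsto_incrementDensity (.of_forall ha)
    (tendsto_natCast_div_of_sub_isLittleO hlam.ne' hlim) (k := k)
  have h_lim := tendsto_integral_withDensity_of_tendsto (μ := volume)
    (fun n ↦ measurable_incrementDensity k n (a n))
    (fun n ↦ incrementDensity_nonneg k n (ha n))
    ((eventually_ge_atTop k).mono fun n hn ↦
      isProbabilityMeasure_withDensity_incrementDensity hn (ha n))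
    (by fun_prop)
    (fun y ↦ Finset.prod_nonneg fun i _ ↦
      ProbabilityTheory.exponentialPDFReal_nonneg (inv_pos.2 hlam) (y i))
    (pi_expMeasure_eq_withDensity (ι := Fin k) hlam ▸ inferInstance)
    h_density (f.compContinuous ⟨_, continuous_inclusivePartialSum⟩)
  rw [← pi_expMeasure_eq_withDensity hlam] at h_lim
  refine h_lim.congr' ?_
  filter_upwards [eventually_ge_atTop k] with n hn
  refine (integral_chainSimplexMeasure hn (ha n) f).symm.trans
    (integral_congr_ae (.of_forall fun x ↦ congrArg f (funext fun i ↦ ?_)))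
  rw [dif_pos (i.isLt.trans_le hn)]
  rfl
end

section
/- Let (a_n) be a sequence of positive reals with a_n = o(n), i.e. a_n/n → 0. For every fixed positive integer k, the pushforward of the normalized Lebesgue measure on the simplex Σ_n(a_n) = {y ∈ ℝ^n : y_i ≥ 0, Σ y_i ≤ a_n} under the projection y ↦ (y_1, …, y_k) converges weakly, as n → ∞, to the Dirac measure at the origin of ℝ^k. -/
/-! The uniform law on `Σ_n(a)` is invariant under permutations of the coordinates, so all
coordinates have the same mean; as their sum is at most `a`, that mean is at most `a / n`. When
`a_n = o(n)`, the expected distance of the first `k` coordinates from the origin is therefore at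
most `k a_n / n → 0`, and convergence in mean to a constant implies weak convergence to the Dirac
mass there, since weak convergence can be tested on bounded Lipschitz functions. -/

open MeasureTheory Filter Topology

/-- The normalized Lebesgue measure on the simplex
`Σ_n(a) = {y ∈ ℝ^n : y_i ≥ 0, ∑ y_i ≤ a}`. -/
noncomputable def simplexMeasure (n : ℕ) (a : ℝ) : Measure (Fin n → ℝ) :=
  (volume {y : Fin n → ℝ | (∀ i, 0 ≤ y i) ∧ ∑ i, y i ≤ a})⁻¹ •
    volume.restrict {y : Fin n → ℝ | (∀ i, 0 ≤ y i) ∧ ∑ i, y i ≤ a}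

open ProbabilityTheory
open scoped ENNReal

section ConvergenceToDirac

variable {γ E : Type*} [PseudoEMetricSpace E] [MeasurableSpace E] {l : Filter γ}

lemma enorm_integral_sub_le_of_lipschitzWith {μ : Measure E} [IsProbabilityMeasure μ]
    {L : NNReal} {f : E → ℝ} (hf : LipschitzWith L f) (hfμ : Integrable f μ) (c : E) :
    ‖∫ x, f x ∂μ - f c‖ₑ ≤ L * ∫⁻ x, edist x c ∂μ :=
  calc ‖∫ x, f x ∂μ - f c‖ₑ = ‖∫ x, (f x - f c) ∂μ‖ₑ := by
        simp [integral_sub hfμ (integrable_const _)]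
    _ ≤ ∫⁻ x, ‖f x - f c‖ₑ ∂μ := enorm_integral_le_lintegral_enorm _
    _ ≤ ∫⁻ x, L * edist x c ∂μ := by
        gcongr with x
        simpa only [edist_eq_enorm_sub] using hf x c
    _ = L * ∫⁻ x, edist x c ∂μ := lintegral_const_mul' _ _ ENNReal.coe_ne_top

theorem tendsto_diracProba_of_tendsto_lintegral_edist [OpensMeasurableSpace E]
    [l.IsCountablyGenerated] {μ : γ → ProbabilityMeasure E} {c : E}
    (h : Tendsto (fun i => ∫⁻ x, edist x c ∂(μ i : Measure E)) l (𝓝 0)) :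
    Tendsto μ l (𝓝 (diracProba c)) := by
  refine tendsto_iff_forall_lipschitz_integral_tendsto.2 ?_
  rintro f ⟨C, hC⟩ ⟨L, hL⟩
  have hf (i : γ) : Integrable f (μ i : Measure E) :=
    (BoundedContinuousFunction.mk ⟨f, hL.continuous⟩ ⟨C, hC⟩).integrable _
  have hLμ : Tendsto (fun i => L * ∫⁻ x, edist x c ∂(μ i : Measure E)) l (𝓝 0) := by
    simpa only [mul_zero] using ENNReal.Tendsto.const_mul h (Or.inr ENNReal.coe_ne_top)
  have hdirac : ∫ x, f x ∂(diracProba c : Measure E) = f c :=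
    integral_dirac' f c hL.continuous.stronglyMeasurable
  rw [hdirac, tendsto_iff_edist_tendsto_0]
  simp only [edist_eq_enorm_sub]
  exact tendsto_of_tendsto_of_tendsto_of_le_of_le tendsto_const_nhds hLμ (fun _ => zero_le)
    fun i => enorm_integral_sub_le_of_lipschitzWith hL (hf i) c

theorem tendsto_integral_comp_of_tendsto_lintegral_edist [BorelSpace E] [l.IsCountablyGenerated]
    {Ω : γ → Type*} [∀ i, MeasurableSpace (Ω i)] {P : ∀ i, Measure (Ω i)}
    [∀ i, IsProbabilityMeasure (P i)] {X : ∀ i, Ω i → E} (hX : ∀ i, AEMeasurable (X i) (P i))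
    {c : E} (h : Tendsto (fun i => ∫⁻ ω, edist (X i ω) c ∂P i) l (𝓝 0))
    (f : BoundedContinuousFunction E ℝ) :
    Tendsto (fun i => ∫ ω, f (X i ω) ∂P i) l (𝓝 (∫ x, f x ∂Measure.dirac c)) := by
  let law (i : γ) : ProbabilityMeasure E := ProbabilityMeasure.map ⟨P i, inferInstance⟩ (hX i)
  have hlaw : Tendsto law l (𝓝 (diracProba c)) := by
    refine tendsto_diracProba_of_tendsto_lintegral_edist (h.congr fun i => ?_)
    have hedist : Measurable fun x => edist x c := (continuous_id.edist continuous_const).measurable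
    exact (lintegral_map' hedist.aemeasurable (hX i)).symm
  refine (ProbabilityMeasure.tendsto_iff_forall_integral_tendsto.1 hlaw f).congr fun i => ?_
  exact integral_map (hX i) f.continuous.aestronglyMeasurable

end ConvergenceToDirac

lemma measurePreserving_cond_preimage {α β : Type*} [MeasurableSpace α] [MeasurableSpace β]
    {μ : Measure α} {ν : Measure β} {f : α → β} (hf : MeasurePreserving f μ ν) {s : Set β}
    (hs : MeasurableSet s) : MeasurePreserving f μ[|f ⁻¹' s] ν[|s] := by
  rw [ProbabilityTheory.cond, ProbabilityTheory.cond, hf.measure_preimage hs.nullMeasurableSet]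
  exact (hf.restrict_preimage hs).smul_measure _

lemma edist_zero_le_sum_enorm {ι : Type*} [Fintype ι] {E : ι → Type*}
    [∀ i, SeminormedAddCommGroup (E i)] (x : ∀ i, E i) :
    edist x 0 ≤ ∑ i, ‖x i‖ₑ :=
  edist_pi_le_iff.2 fun i => by
    simpa using Finset.single_le_sum (f := fun j => ‖x j‖ₑ) (fun _ _ => zero_le)
      (Finset.mem_univ i)

section SolidSimplex

/-- The solid simplex `{y ∈ ℝ^ι : y_i ≥ 0, ∑ y_i ≤ a}`, which is `Σ_n(a)` for `ι = Fin n`; its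
normalized Lebesgue measure is the conditional measure `volume[|solidSimplex ι a]`. -/
def solidSimplex (ι : Type*) [Fintype ι] (a : ℝ) : Set (ι → ℝ) :=
  {y | (∀ i, 0 ≤ y i) ∧ ∑ i, y i ≤ a}

variable {ι : Type*} [Fintype ι] {a : ℝ}

lemma measurableSet_solidSimplex : MeasurableSet (solidSimplex ι a) :=
  (isClosed_Ici.inter <|
    isClosed_le (continuous_finsetSum _ fun i _ => continuous_apply i)
      continuous_const : IsClosed {y : ι → ℝ | 0 ≤ y ∧ ∑ i, y i ≤ a}).measurableSet

lemma solidSimplex_subset_Icc : solidSimplex ι a ⊆ Set.Icc 0 (fun _ => a) :=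
  fun _ hy => ⟨hy.1, fun i =>
    (Finset.single_le_sum (fun j _ => hy.1 j) (Finset.mem_univ i)).trans hy.2⟩

lemma Icc_subset_solidSimplex (ha : 0 ≤ a) :
    Set.Icc 0 (fun _ => a / Fintype.card ι) ⊆ solidSimplex ι a := by
  refine fun y hy => ⟨hy.1, ?_⟩
  rcases isEmpty_or_nonempty ι with _ | _
  · simpa using ha
  · calc ∑ i, y i ≤ ∑ _i : ι, a / Fintype.card ι := Finset.sum_le_sum fun i _ => hy.2 i
      _ = Fintype.card ι * (a / Fintype.card ι) := by simp
      _ = a := mul_div_cancel₀ _ (by simp)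

lemma volume_solidSimplex_ne_top : volume (solidSimplex ι a) ≠ ∞ :=
  measure_ne_top_of_subset solidSimplex_subset_Icc isCompact_Icc.measure_ne_top

lemma volume_solidSimplex_ne_zero (ha : 0 < a) : volume (solidSimplex ι a) ≠ 0 := by
  refine (lt_of_lt_of_le ?_ (measure_mono (Icc_subset_solidSimplex ha.le))).ne'
  rw [Real.volume_Icc_pi, CanonicallyOrderedAdd.prod_pos]
  intro i _
  have : Nonempty ι := ⟨i⟩
  simp [div_pos ha, Fintype.card_pos]

lemma isProbabilityMeasure_cond_solidSimplex (ha : 0 < a) :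
    IsProbabilityMeasure (volume[|solidSimplex ι a]) :=
  cond_isProbabilityMeasure_of_finite (volume_solidSimplex_ne_zero ha) volume_solidSimplex_ne_top

lemma preimage_piCongrLeft_solidSimplex {ι' : Type*} [Fintype ι'] (σ : ι ≃ ι') :
    MeasurableEquiv.piCongrLeft (fun _ => ℝ) σ ⁻¹' solidSimplex ι' a = solidSimplex ι a := by
  ext y
  simp only [solidSimplex, Set.mem_preimage, Set.mem_ofPred_eq, ← σ.forall_congr_right,
    ← Equiv.sum_comp σ, MeasurableEquiv.piCongrLeft_apply_apply]

lemma identDistrib_eval_cond_solidSimplex (i j : ι) :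
    IdentDistrib (Function.eval i) (Function.eval j)
      (volume[|solidSimplex ι a]) (volume[|solidSimplex ι a]) := by
  classical
  let σ : ι ≃ ι := Equiv.swap i j
  have hσ : MeasurePreserving (MeasurableEquiv.piCongrLeft (fun _ => ℝ) σ)
      (volume[|solidSimplex ι a]) (volume[|solidSimplex ι a]) := by
    simpa only [preimage_piCongrLeft_solidSimplex] using
      measurePreserving_cond_preimage (volume_measurePreserving_piCongrLeft (fun _ => ℝ) σ)
        (measurableSet_solidSimplex (ι := ι) (a := a))
  refine ⟨(measurable_pi_apply i).aemeasurable, (measurable_pi_apply j).aemeasurable, ?_⟩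
  have heval : Function.eval i =
      Function.eval j ∘ MeasurableEquiv.piCongrLeft (fun _ : ι => ℝ) σ := by
    ext y
    simpa only [σ, Equiv.swap_apply_left, Function.eval, Function.comp_apply] using
      (MeasurableEquiv.piCongrLeft_apply_apply (β := fun _ => ℝ) σ y i).symm
  rw [heval, ← Measure.map_map (measurable_pi_apply j) hσ.measurable, hσ.map_eq]

lemma sum_enorm_le_of_mem_solidSimplex {y : ι → ℝ} (hy : y ∈ solidSimplex ι a) :
    ∑ i, ‖y i‖ₑ ≤ ENNReal.ofReal a := by
  calc ∑ i, ‖y i‖ₑ = ENNReal.ofReal (∑ i, y i) := by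
        rw [ENNReal.ofReal_sum_of_nonneg fun i _ => hy.1 i]
        exact Finset.sum_congr rfl fun i _ => Real.enorm_of_nonneg (hy.1 i)
    _ ≤ ENNReal.ofReal a := ENNReal.ofReal_le_ofReal hy.2

lemma lintegral_enorm_eval_cond_solidSimplex_le (a : ℝ) (i : ι) :
    ∫⁻ y, ‖y i‖ₑ ∂volume[|solidSimplex ι a] ≤ ENNReal.ofReal (a / Fintype.card ι) := by
  have hcard : 0 < Fintype.card ι := Fintype.card_pos_iff.2 ⟨i⟩
  have hmean (j : ι) : ∫⁻ y, ‖y i‖ₑ ∂volume[|solidSimplex ι a] =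
      ∫⁻ y, ‖y j‖ₑ ∂volume[|solidSimplex ι a] :=
    ((identDistrib_eval_cond_solidSimplex i j).comp measurable_enorm).lintegral_eq
  rw [ENNReal.ofReal_div_of_pos (Nat.cast_pos.2 hcard), ENNReal.ofReal_natCast,
    ENNReal.le_div_iff_mul_le (by simp [hcard.ne']) (by simp), mul_comm]
  calc (Fintype.card ι : ℝ≥0∞) * ∫⁻ y, ‖y i‖ₑ ∂volume[|solidSimplex ι a]
      = ∑ j, ∫⁻ y, ‖y j‖ₑ ∂volume[|solidSimplex ι a] := by simp [← hmean]
    _ = ∫⁻ y, ∑ j, ‖y j‖ₑ ∂volume[|solidSimplex ι a] :=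
        (lintegral_finsetSum _ fun j _ => (measurable_pi_apply j).enorm).symm
    _ ≤ ∫⁻ _, ENNReal.ofReal a ∂volume[|solidSimplex ι a] := by
        refine lintegral_mono_ae ?_
        filter_upwards [ae_cond_mem measurableSet_solidSimplex] with y hy
        exact sum_enorm_le_of_mem_solidSimplex hy
    _ ≤ ENNReal.ofReal a := by
        rw [lintegral_const]
        exact mul_le_of_le_one_right' prob_le_one

lemma simplexMeasure_eq_cond (n : ℕ) (a : ℝ) :
    simplexMeasure n a = volume[|solidSimplex (Fin n) a] :=
  rfl

end SolidSimplex

section InitialCoordinates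

variable {n k : ℕ} {a : ℝ}

/-- The projection `(y_1, …, y_n) ↦ (y_1, …, y_k)`, padded with zeros when `n < k`. -/
def initialCoords (n k : ℕ) (y : Fin n → ℝ) : Fin k → ℝ :=
  fun i => if h : (i : ℕ) < n then y ⟨i, h⟩ else 0

lemma measurable_initialCoords : Measurable (initialCoords n k) := by
  refine measurable_pi_lambda _ fun i => ?_
  unfold initialCoords
  split_ifs <;> fun_prop

lemma lintegral_edist_initialCoords_le :
    ∫⁻ y, edist (initialCoords n k y) 0 ∂simplexMeasure n a ≤ k * ENNReal.ofReal (a / n) := by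
  have hcoord (i : Fin k) :
      ∫⁻ y, ‖initialCoords n k y i‖ₑ ∂simplexMeasure n a ≤ ENNReal.ofReal (a / n) := by
    unfold initialCoords
    split_ifs with hi
    · simpa [simplexMeasure_eq_cond] using
        lintegral_enorm_eval_cond_solidSimplex_le a (⟨i, hi⟩ : Fin n)
    · simp
  calc ∫⁻ y, edist (initialCoords n k y) 0 ∂simplexMeasure n a
      ≤ ∫⁻ y, ∑ i, ‖initialCoords n k y i‖ₑ ∂simplexMeasure n a :=
        lintegral_mono fun y => edist_zero_le_sum_enorm _
    _ = ∑ i, ∫⁻ y, ‖initialCoords n k y i‖ₑ ∂simplexMeasure n a :=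
        lintegral_finsetSum _ fun i _ =>
          ((measurable_pi_apply i).comp measurable_initialCoords).enorm
    _ ≤ ∑ _i : Fin k, ENNReal.ofReal (a / n) := Finset.sum_le_sum fun i _ => hcoord i
    _ = k * ENNReal.ofReal (a / n) := by simp

end InitialCoordinates

/-- If `a_n = o(n)`, the first `k` marginals of the normalized Lebesgue measures on the
simplices `Σ_n(a_n)` converge weakly to the Dirac measure at the origin of `ℝ^k`. -/
theorem stmt2 (a : ℕ → ℝ) (ha : ∀ n, 0 < a n)
    (hlim : Tendsto (fun n => a n / n) atTop (𝓝 0)) (k : ℕ) (hk : 0 < k) :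
    ∀ f : BoundedContinuousFunction (Fin k → ℝ) ℝ,
      Tendsto
        (fun n => ∫ y, f (fun i : Fin k => if h : (i : ℕ) < n then y ⟨i, h⟩ else 0)
          ∂ simplexMeasure n (a n))
        atTop
        (𝓝 (∫ x, f x ∂ Measure.dirac (0 : Fin k → ℝ))) := by
  have hprob (n : ℕ) : IsProbabilityMeasure (simplexMeasure n (a n)) :=
    simplexMeasure_eq_cond n (a n) ▸ isProbabilityMeasure_cond_solidSimplex (ha n)
  have hbound : Tendsto (fun n => k * ENNReal.ofReal (a n / n)) atTop (𝓝 0) := by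
    simpa using ENNReal.Tendsto.const_mul (ENNReal.tendsto_ofReal hlim)
      (Or.inr (ENNReal.natCast_ne_top k))
  exact tendsto_integral_comp_of_tendsto_lintegral_edist (X := fun n => initialCoords n k)
    (fun _ => measurable_initialCoords.aemeasurable) <|
    tendsto_of_tendsto_of_tendsto_of_le_of_le tendsto_const_nhds hbound (fun _ => zero_le)
      fun _ => lintegral_edist_initialCoords_le
end
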